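/- Suppose g(r) = o(r^{-c}) as r → ∞ for some c > d, and fix γ > 0. Let Δ_n denote the maximum vertex degree of G_n(r̂_n(γ)). Then almost surely, limsup_{n→∞} Δ_n/(log n) ≤ γ·H₊⁻¹(1/γ). -/

import Mathlib

open MeasureTheory ProbabilityTheory Filter Set

noncomputable section

namespace RCM

/-- The toroidal metric on the unit cube. -/
def torusDist {d : ℕ} (x y : EuclideanSpace ℝ (Fin d)) : ℝ :=
  ⨅ z : Fin d → ℤ, ‖x - y - (WithLp.equiv 2 (Fin d → ℝ)).symm (fun i => (z i : ℝ))‖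

/-- The half-open unit cube `S = (-1/2, 1/2]^d`. -/
def cube (d : ℕ) : Set (EuclideanSpace ℝ (Fin d)) :=
  {x | ∀ i, x i ∈ Set.Ioc (-(1/2) : ℝ) (1/2)}

/-- The random connection model: i.i.d. uniform points `X`, coupled Poisson counts `N`,
i.i.d. uniform edge variables `U`, with the three families mutually independent, and a
non-increasing connection function `g : [0,∞) → [0,1]` with finite positive integral `α`. -/
structure Model (d : ℕ) {Ω : Type*} [MeasurableSpace Ω] (P : Measure Ω) where
  g : ℝ → ℝ
  α : ℝ
  X : ℕ → Ω → EuclideanSpace ℝ (Fin d)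
  N : ℕ → Ω → ℕ
  U : ℕ → ℕ → Ω → ℝ
  g_antitone : AntitoneOn g (Set.Ici 0)
  g_mem : ∀ r : ℝ, 0 ≤ r → g r ∈ Set.Icc (0 : ℝ) 1
  g_integrable : MeasureTheory.Integrable (fun x : EuclideanSpace ℝ (Fin d) => g ‖x‖)
  α_def : α = ∫ x : EuclideanSpace ℝ (Fin d), g ‖x‖
  α_pos : 0 < α
  X_meas : ∀ i, Measurable (X i)
  X_unif : ∀ i : ℕ, 1 ≤ i → Measure.map (X i) P = volume.restrict (cube d)
  X_indep : iIndepFun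
    (fun i : {i : ℕ // 1 ≤ i} => X i) P
  N_meas : ∀ n, Measurable (N n)
  N_mono : ∀ ω, Monotone fun n => N n ω
  N_poisson : ∀ n k : ℕ,
    P {ω | N n ω = k} = ENNReal.ofReal (Real.exp (-(n : ℝ)) * (n : ℝ) ^ k / k.factorial)
  U_meas : ∀ i j, Measurable (U i j)
  U_unif : ∀ i j : ℕ, 1 ≤ i → i < j →
    Measure.map (U i j) P = volume.restrict (Set.Icc (0 : ℝ) 1)
  U_indep : iIndepFun
    (fun p : {p : ℕ × ℕ // 1 ≤ p.1 ∧ p.1 < p.2} => U p.1.1 p.1.2) P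
  families_indep : iIndep
    (![MeasurableSpace.comap (fun ω => fun i : ℕ => X i ω) inferInstance,
       MeasurableSpace.comap (fun ω => fun n : ℕ => N n ω) inferInstance,
       MeasurableSpace.comap (fun ω => fun p : ℕ × ℕ => U p.1 p.2 ω) inferInstance]) P

variable {d : ℕ} {Ω : Type*} [MeasurableSpace Ω] {P : Measure Ω}

/-- Adjacency in the graph `G_n(r)`: vertices `1 ≤ i,j ≤ N_n` are joined iff
`U_{ij} ≤ g(dist(X_i,X_j)/r)`. -/
def adj (M : Model d P) (n : ℕ) (r : ℝ) (ω : Ω) (i j : ℕ) : Prop :=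
  i ≠ j ∧ 1 ≤ i ∧ 1 ≤ j ∧ i ≤ M.N n ω ∧ j ≤ M.N n ω ∧
    M.U (min i j) (max i j) ω ≤ M.g (torusDist (M.X i ω) (M.X j ω) / r)

/-- The degree of vertex `i` in `G_n(r)`. -/
def deg (M : Model d P) (n : ℕ) (r : ℝ) (ω : Ω) (i : ℕ) : ℕ :=
  {j : ℕ | adj M n r ω i j}.ncard

/-- `W_n(r)`, the number of isolated vertices of `G_n(r)`. -/
def isolatedCount (M : Model d P) (n : ℕ) (r : ℝ) (ω : Ω) : ℕ :=
  {i : ℕ | 1 ≤ i ∧ i ≤ M.N n ω ∧ deg M n r ω i = 0}.ncard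


/-- `r̂_n(γ)` defined by `r̂_n(γ)^d = γ log n / (α n)`. -/
def rhat (M : Model d P) (γ : ℝ) (n : ℕ) : ℝ :=
  (γ * Real.log n / (M.α * n)) ^ ((1 : ℝ) / d)

/-- `d_n`, the critical parameter for absence of isolated nodes. -/
def critRadius (M : Model d P) (n : ℕ) (ω : Ω) : ℝ :=
  sInf {r : ℝ | 0 < r ∧ isolatedCount M n r ω = 0}

/-- The maximum vertex degree `Δ_n` of `G_n(r)`. -/
def maxDeg (M : Model d P) (n : ℕ) (r : ℝ) (ω : Ω) : ℕ :=
  (Finset.Icc 1 (M.N n ω)).sup (deg M n r ω)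

/-- The minimum vertex degree `δ_n` of `G_n(r)`. -/
def minDeg (M : Model d P) (n : ℕ) (r : ℝ) (ω : Ω) : ℕ :=
  sInf {k : ℕ | ∃ i, 1 ≤ i ∧ i ≤ M.N n ω ∧ deg M n r ω i = k}

/-- The length (toroidal metric) of the longest edge of `G_n(r)` (`0` if there are no edges). -/
def longestEdge (M : Model d P) (n : ℕ) (r : ℝ) (ω : Ω) : ℝ :=
  sSup ({0} ∪ {t : ℝ | ∃ i j, adj M n r ω i j ∧ t = torusDist (M.X i ω) (M.X j ω)})

/-- Connectivity of `G_n(r)`: any two vertices are joined by a path. -/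
def connectedGraph (M : Model d P) (n : ℕ) (r : ℝ) (ω : Ω) : Prop :=
  ∀ i j : ℕ, 1 ≤ i → i ≤ M.N n ω → 1 ≤ j → j ≤ M.N n ω →
    Relation.ReflTransGen (adj M n r ω) i j

/-- `H(x) = 1 - x + x log x` (with `H(0) = 1`, since `log 0 = 0` in Lean). -/
def H (x : ℝ) : ℝ := 1 - x + x * Real.log x

/-- The inverse of the restriction of `H` to `[1, ∞)`. -/
def Hplusinv (y : ℝ) : ℝ := sInf {x : ℝ | 1 ≤ x ∧ y ≤ H x}

/-- The inverse of the restriction of `H` to `[0, 1]`. -/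
def Hminusinv (y : ℝ) : ℝ := sInf {x : ℝ | 0 ≤ x ∧ H x ≤ y}

/-- The standard normal distribution function. -/
def stdNormalCDF (x : ℝ) : ℝ :=
  ∫ t in Set.Iic x, Real.exp (-t ^ 2 / 2) / Real.sqrt (2 * Real.pi)

/-- Tonelli for a product of functions of a random element `A` and of random variables `B j` that
are mutually independent and independent of `A`: each factor may be averaged separately. -/
lemma lintegral_prod_le_of_indepFun {ι β : Type*} {δ : Type*} [Fintype ι] [MeasurableSpace β]
    [MeasurableSpace δ] [IsProbabilityMeasure P] {A : Ω → β} {B : ι → Ω → δ}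
    (hA : Measurable A) (hB : ∀ j, Measurable (B j)) (hBi : iIndepFun B P)
    (hAB : IndepFun A (fun ω j => B j ω) P) {F : ι → β → δ → ENNReal}
    (hF : ∀ j, Measurable (Function.uncurry (F j))) {C : ι → β → ENNReal}
    (hC : ∀ a j, ∫⁻ ω, F j a (B j ω) ∂P ≤ C j a) :
    ∫⁻ ω, ∏ j, F j (A ω) (B j ω) ∂P ≤ ∫⁻ ω, ∏ j, C j (A ω) ∂P := by
  have hBm : Measurable (fun ω j => B j ω) := measurable_pi_iff.2 hB
  have hmeas : Measurable (fun q : β × (ι → δ) => ∏ j, F j q.1 (q.2 j)) := by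
    refine Finset.measurable_prod _ fun j _ => ?_
    exact (hF j).comp (measurable_fst.prodMk ((measurable_pi_apply j).comp measurable_snd))
  have hFa : ∀ j a, Measurable (F j a) := fun j a => (hF j).comp measurable_prodMk_left
  calc ∫⁻ ω, ∏ j, F j (A ω) (B j ω) ∂P
      = ∫⁻ q, ∏ j, F j q.1 (q.2 j) ∂(P.map fun ω => (A ω, fun j => B j ω)) := by
        rw [lintegral_map hmeas (hA.prodMk hBm)]
    _ = ∫⁻ a, ∫⁻ b, ∏ j, F j a (b j) ∂(P.map fun ω j => B j ω) ∂(P.map A) := by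
        rw [(indepFun_iff_map_prod_eq_prod_map_map hA.aemeasurable hBm.aemeasurable).1 hAB,
          lintegral_prod _ hmeas.aemeasurable]
    _ = ∫⁻ ω, ∫⁻ b, ∏ j, F j (A ω) (b j) ∂(P.map fun ω j => B j ω) ∂P :=
        lintegral_map hmeas.lintegral_prod_right' hA
    _ ≤ ∫⁻ ω, ∏ j, C j (A ω) ∂P := by
        refine lintegral_mono fun ω => ?_
        have hm : Measurable (fun b : ι → δ => ∏ j, F j (A ω) (b j)) :=
          hmeas.comp measurable_prodMk_left
        rw [lintegral_map hm hBm,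
          lintegral_prod_eq_prod_lintegral_of_indepFun Finset.univ
            (fun j ω' => F j (A ω) (B j ω')) (hBi.comp _ fun j => hFa j (A ω))
            (fun j => (hFa j _).comp (hB j))]
        exact Finset.prod_le_prod' fun j _ => hC (A ω) j

/-- The lattice point with integer coordinates `z`. -/
def latticePoint {d : ℕ} (z : Fin d → ℤ) : EuclideanSpace ℝ (Fin d) :=
  (WithLp.equiv 2 (Fin d → ℝ)).symm (fun i => (z i : ℝ))

@[simp]
lemma latticePoint_apply (z : Fin d → ℤ) (i : Fin d) : latticePoint z i = z i := rfl

lemma torusDist_nonneg (x y : EuclideanSpace ℝ (Fin d)) : 0 ≤ torusDist x y :=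
  Real.iInf_nonneg fun _ => norm_nonneg _

lemma measurable_torusDist :
    Measurable fun q : EuclideanSpace ℝ (Fin d) × EuclideanSpace ℝ (Fin d) =>
      torusDist q.1 q.2 := by
  unfold torusDist
  exact Measurable.iInf fun z => by fun_prop

lemma exists_norm_sub_latticePoint_le_torusDist (x y : EuclideanSpace ℝ (Fin d)) :
    ∃ z : Fin d → ℤ, ‖x - y - latticePoint z‖ ≤ torusDist x y := by
  refine ⟨fun i => round (x i - y i), le_ciInf fun z => ?_⟩
  rw [EuclideanSpace.norm_eq, EuclideanSpace.norm_eq]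
  refine Real.sqrt_le_sqrt (Finset.sum_le_sum fun i _ => ?_)
  have h := round_le (x i - y i) (z i)
  simp only [PiLp.sub_apply, latticePoint_apply, Real.norm_eq_abs]
  exact pow_le_pow_left₀ (abs_nonneg _) h 2

lemma measurableSet_cube : MeasurableSet (cube d) := by
  have : cube d = ⋂ i, (fun x : EuclideanSpace ℝ (Fin d) => x i) ⁻¹' Set.Ioc (-(1/2)) (1/2) := by
    ext x; simp [cube]
  rw [this]
  exact MeasurableSet.iInter fun i => measurableSet_Ioc.preimage (by fun_prop)

/-- Lattice translates of the cube are disjoint, so integrating a periodization over the cube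
gives at most the integral over the whole space. -/
lemma tsum_setLIntegral_cube_le (f : EuclideanSpace ℝ (Fin d) → ENNReal) :
    ∑' z : Fin d → ℤ, ∫⁻ y in cube d, f (y + latticePoint z) ≤ ∫⁻ y, f y := by
  let s : (Fin d → ℤ) → Set (EuclideanSpace ℝ (Fin d)) := fun z => {w | w - latticePoint z ∈ cube d}
  have hs : ∀ z, MeasurableSet (s z) := fun z => measurableSet_cube.preimage (by fun_prop)
  have hdisj : Pairwise (Function.onFun Disjoint s) := by
    intro z z' hzz'
    refine Set.disjoint_left.2 fun w hw hw' => hzz' (funext fun i => ?_)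
    have h1 := hw i
    have h2 := hw' i
    simp only [PiLp.sub_apply, latticePoint_apply, Set.mem_Ioc] at h1 h2
    have h3 : (z i : ℝ) < z' i + 1 := by linarith
    have h4 : (z' i : ℝ) < z i + 1 := by linarith
    norm_cast at h3 h4
    omega
  calc ∑' z : Fin d → ℤ, ∫⁻ y in cube d, f (y + latticePoint z)
      = ∑' z, ∫⁻ y in s z, f y := by
        refine tsum_congr fun z => ?_
        rw [← (measurePreserving_add_right volume (latticePoint z)).setLIntegral_comp_preimage_emb
          (measurableEmbedding_addRight _) f (s z)]
        congr 2
        ext y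
        simp [s]
    _ = ∫⁻ y in ⋃ z, s z, f y := (lintegral_iUnion hs hdisj f).symm
    _ ≤ ∫⁻ y, f y := setLIntegral_le_lintegral _ _

lemma Model.measurable_g_abs (M : Model d P) : Measurable fun t : ℝ => M.g |t| := by
  have h : Antitone fun t : ℝ => M.g (max 0 t) := fun a b hab =>
    M.g_antitone (le_max_left 0 a) (le_max_left 0 b) (max_le_max_left 0 hab)
  convert h.measurable.comp measurable_abs using 1
  ext t
  simp

lemma Model.measurable_link (M : Model d P) {r : ℝ} (hr : 0 < r) {β : Type*} [MeasurableSpace β]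
    {x y : β → EuclideanSpace ℝ (Fin d)} (hx : Measurable x) (hy : Measurable y) :
    Measurable fun b => M.g (torusDist (x b) (y b) / r) := by
  have h : Measurable fun b => torusDist (x b) (y b) / r :=
    (measurable_torusDist.comp (hx.prodMk hy)).div_const r
  convert M.measurable_g_abs.comp h using 1
  ext b
  simp [abs_of_nonneg (div_nonneg (torusDist_nonneg (x b) (y b)) hr.le)]

/-- The connection probability of a fixed point to a uniform point of the torus. -/
lemma Model.setLIntegral_link_le (M : Model d P) {r : ℝ} (hr : 0 < r)
    (x : EuclideanSpace ℝ (Fin d)) :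
    ∫⁻ y in cube d, ENNReal.ofReal (M.g (torusDist x y / r)) ≤ ENNReal.ofReal (r ^ d * M.α) := by
  let f : EuclideanSpace ℝ (Fin d) → ENNReal := fun w => ENNReal.ofReal (M.g ‖r⁻¹ • w‖)
  have hf : Measurable f := by
    have h : Measurable fun w : EuclideanSpace ℝ (Fin d) => ‖r⁻¹ • w‖ := by fun_prop
    convert (M.measurable_g_abs.comp h).ennreal_ofReal using 1
    ext w
    simp [f]
  calc ∫⁻ y in cube d, ENNReal.ofReal (M.g (torusDist x y / r))
      ≤ ∫⁻ y in cube d, ∑' z : Fin d → ℤ, f (x - (y + latticePoint z)) := by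
        refine lintegral_mono fun y => ?_
        obtain ⟨z, hz⟩ := exists_norm_sub_latticePoint_le_torusDist x y
        refine le_trans ?_ (ENNReal.le_tsum z)
        refine ENNReal.ofReal_le_ofReal (M.g_antitone (norm_nonneg _)
          (div_nonneg (torusDist_nonneg x y) hr.le) ?_)
        rw [norm_smul, norm_inv, Real.norm_eq_abs, abs_of_pos hr, div_eq_inv_mul, ← sub_sub]
        gcongr
    _ = ∑' z : Fin d → ℤ, ∫⁻ y in cube d, f (x - (y + latticePoint z)) :=
        lintegral_tsum fun z => (hf.comp (by fun_prop)).aemeasurable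
    _ ≤ ∫⁻ y, f (x - y) := tsum_setLIntegral_cube_le fun y => f (x - y)
    _ = ∫⁻ y, f y := lintegral_sub_left_eq_self f x
    _ = ENNReal.ofReal (∫ y : EuclideanSpace ℝ (Fin d), M.g ‖r⁻¹ • y‖) := by
        rw [ofReal_integral_eq_lintegral_ofReal (M.g_integrable.comp_smul (inv_ne_zero hr.ne'))]
        exact ae_of_all _ fun y => (M.g_mem _ (norm_nonneg _)).1
    _ = ENNReal.ofReal (r ^ d * M.α) := by
        rw [Measure.integral_comp_smul volume (fun y => M.g ‖y‖) r⁻¹, ← M.α_def]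
        simp [abs_of_pos (pow_pos hr d)]

lemma H_strictMonoOn : StrictMonoOn H (Set.Ici 1) := by
  intro x hx y hy hxy
  have hx1 : 1 ≤ x := hx
  have hx0 : 0 < x := by linarith
  have hy0 : 0 < y := by linarith
  have h1 : Real.log (x / y) < x / y - 1 :=
    Real.log_lt_sub_one_of_pos (by positivity) (by rw [Ne, div_eq_one_iff_eq hy0.ne']; exact hxy.ne)
  rw [Real.log_div hx0.ne' hy0.ne'] at h1
  have h2 := mul_lt_mul_of_pos_left h1 hy0
  have h3 : y * (x / y - 1) = x - y := by field_simp
  have h4 := mul_nonneg (sub_nonneg.2 hxy.le) (Real.log_nonneg hx1)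
  unfold H
  nlinarith

lemma exists_le_H {y : ℝ} (hy : 0 ≤ y) : ∃ x : ℝ, 1 ≤ x ∧ y ≤ H x := by
  refine ⟨Real.exp (1 + y), Real.one_le_exp (by linarith), ?_⟩
  have : 1 ≤ Real.exp (1 + y) := Real.one_le_exp (by linarith)
  simp only [H, Real.log_exp]
  nlinarith

lemma one_le_Hplusinv {y : ℝ} (hy : 0 ≤ y) : 1 ≤ Hplusinv y :=
  le_csInf (exists_le_H hy) fun _ h => h.1

lemma lt_H_of_Hplusinv_lt {x y : ℝ} (hy : 0 ≤ y) (hx : Hplusinv y < x) : y < H x := by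
  obtain ⟨x', ⟨h1, h2⟩, h3⟩ := exists_lt_of_csInf_lt (exists_le_H hy) hx
  exact h2.trans_lt (H_strictMonoOn h1 (h1.trans h3.le) h3)

open scoped Classical in
/-- The number of points among the first `k`, other than the `i`-th, that are joined to the `i`-th
point, as a function of the positions and of the edge variables. -/
def linkCount (M : Model d P) (r : ℝ) (k i : ℕ)
    (q : (ℕ → EuclideanSpace ℝ (Fin d)) × (ℕ × ℕ → ℝ)) : ℕ :=
  {j ∈ (Finset.Icc 1 k).erase i |
    q.2 (min i j, max i j) ≤ M.g (torusDist (q.1 i) (q.1 j) / r)}.card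

/-- All positions and edge variables. -/
def Model.realization (M : Model d P) (ω : Ω) : (ℕ → EuclideanSpace ℝ (Fin d)) × (ℕ × ℕ → ℝ) :=
  (fun i => M.X i ω, fun p => M.U p.1 p.2 ω)

lemma measurable_positions (M : Model d P) : Measurable fun ω (i : ℕ) => M.X i ω :=
  measurable_pi_iff.2 M.X_meas

lemma measurable_edgeVariables (M : Model d P) : Measurable fun ω (p : ℕ × ℕ) => M.U p.1 p.2 ω :=
  measurable_pi_iff.2 fun p => M.U_meas p.1 p.2

lemma Model.measurable_realization (M : Model d P) : Measurable M.realization :=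
  (measurable_positions M).prodMk (measurable_edgeVariables M)

lemma measurable_linkCount (M : Model d P) {r : ℝ} (hr : 0 < r) (k i : ℕ) :
    Measurable (linkCount M r k i) := by
  classical
  have h : linkCount M r k i = fun q => ∑ j ∈ (Finset.Icc 1 k).erase i,
      if q.2 (min i j, max i j) ≤ M.g (torusDist (q.1 i) (q.1 j) / r) then 1 else 0 := by
    ext q
    rw [linkCount, Finset.card_filter]
  rw [h]
  refine Finset.measurable_sum _ fun j _ => Measurable.ite ?_ measurable_const measurable_const
  exact measurableSet_le (by fun_prop) (M.measurable_link hr (by fun_prop) (by fun_prop))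

lemma deg_le_linkCount (M : Model d P) (n : ℕ) (r : ℝ) (ω : Ω) (i : ℕ) :
    deg M n r ω i ≤ linkCount M r (M.N n ω) i (M.realization ω) := by
  classical
  unfold deg linkCount
  rw [← Set.ncard_coe_finset]
  refine Set.ncard_le_ncard (fun j hj => ?_) (Finset.finite_toSet _)
  obtain ⟨h1, -, h3, -, h5, h6⟩ := hj
  simp only [Finset.coe_filter, Finset.mem_erase, Finset.mem_Icc, Set.mem_ofPred_eq]
  exact ⟨⟨h1.symm, h3, h5⟩, h6⟩

lemma indepFun_positions_edgeVariables (M : Model d P) :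
    IndepFun (fun ω (i : ℕ) => M.X i ω) (fun ω (p : ℕ × ℕ) => M.U p.1 p.2 ω) P := by
  have h := M.families_indep.indep (show (0 : Fin 3) ≠ 2 by decide)
  exact h

lemma indepFun_realization_count (M : Model d P) (n : ℕ) : IndepFun M.realization (M.N n) P := by
  have hN : Measurable fun ω (n : ℕ) => M.N n ω := measurable_pi_iff.2 M.N_meas
  have h := indep_iSup_of_disjoint (S := {0, 2}) (T := {1}) (fun l : Fin 3 => ?_)
    M.families_indep (by simp)
  · rw [iSup_singleton, iSup_pair] at h
    rw [IndepFun_iff_Indep]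
    refine indep_of_indep_of_le_left (indep_of_indep_of_le_right h ?_) ?_
    · exact ((measurable_pi_apply (X := fun _ : ℕ => ℕ) n).comp
        (comap_measurable fun ω (n : ℕ) => M.N n ω)).comap_le
    · refine Measurable.comap_le (Measurable.prodMk ?_ ?_)
      · exact (comap_measurable fun ω (i : ℕ) => M.X i ω).mono le_sup_left le_rfl
      · exact (comap_measurable fun ω (p : ℕ × ℕ) => M.U p.1 p.2 ω).mono le_sup_right le_rfl
  · fin_cases l
    · exact (measurable_positions M).comap_le
    · exact hN.comap_le
    · exact (measurable_edgeVariables M).comap_le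

/-- Exponential moment of the degree of a fixed vertex. -/
lemma lintegral_pow_linkCount_le [IsProbabilityMeasure P] (M : Model d P) {r : ℝ} (hr : 0 < r)
    {k i : ℕ} (hi : i ∈ Finset.Icc 1 k) (s : ENNReal) :
    ∫⁻ ω, (1 + s) ^ linkCount M r k i (M.realization ω) ∂P
      ≤ (1 + s * ENNReal.ofReal (r ^ d * M.α)) ^ (k - 1) := by
  classical
  have hi1 : 1 ≤ i := (Finset.mem_Icc.1 hi).1
  let T : Finset ℕ := (Finset.Icc 1 k).erase i
  have hT1 : ∀ j : T, 1 ≤ (j : ℕ) := fun j =>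
    (Finset.mem_Icc.1 (Finset.mem_of_mem_erase j.2)).1
  have hTi : ∀ j : T, (j : ℕ) ≠ i := fun j => Finset.ne_of_mem_erase j.2
  have hpair : ∀ j : T, 1 ≤ min i (j : ℕ) ∧ min i (j : ℕ) < max i (j : ℕ) := fun j =>
    ⟨le_min hi1 (hT1 j), min_lt_max.2 (hTi j).symm⟩
  let B : T → Ω → ℝ := fun j => M.U (min i (j : ℕ)) (max i (j : ℕ))
  have hBi : iIndepFun B P := by
    refine M.U_indep.precomp (g := fun j : T => ⟨(min i (j : ℕ), max i (j : ℕ)), hpair j⟩) ?_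
    intro j j' h
    simp only [Subtype.mk.injEq, Prod.mk.injEq] at h
    apply Subtype.ext
    have := hTi j
    have := hTi j'
    omega
  have hXi : iIndepFun (fun j : T => M.X j) P :=
    M.X_indep.precomp (g := fun j : T => ⟨(j : ℕ), hT1 j⟩) fun j j' h =>
      Subtype.ext (by simpa using h)
  have hAB : IndepFun (fun ω (i : ℕ) => M.X i ω) (fun ω j => B j ω) P := by
    have hψ : Measurable fun (u : ℕ × ℕ → ℝ) (j : T) => u (min i (j : ℕ), max i (j : ℕ)) := by
      fun_prop
    exact (indepFun_positions_edgeVariables M).comp measurable_id hψ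
  have hXX : IndepFun (M.X i) (fun ω (j : T) => M.X j ω) P := by
    have h := M.X_indep.indepFun_finset {⟨i, hi1⟩}
      (Finset.univ.image fun j : T => ⟨(j : ℕ), hT1 j⟩) (by
        simp only [Finset.disjoint_singleton_left, Finset.mem_image, Finset.mem_univ, true_and,
          Subtype.mk.injEq, not_exists]
        exact hTi) (fun l => M.X_meas l)
    exact h.comp (φ := fun a => a ⟨⟨i, hi1⟩, Finset.mem_singleton_self _⟩)
      (ψ := fun b (j : T) => b ⟨⟨(j : ℕ), hT1 j⟩, Finset.mem_image_of_mem _ (Finset.mem_univ j)⟩)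
      (measurable_pi_apply (X := fun _ => EuclideanSpace ℝ (Fin d)) _)
      (measurable_pi_iff.2 fun j =>
        measurable_pi_apply (X := fun _ => EuclideanSpace ℝ (Fin d)) _)
  let G : EuclideanSpace ℝ (Fin d) → EuclideanSpace ℝ (Fin d) → ℝ :=
    fun x y => M.g (torusDist x y / r)
  have hG : Measurable (Function.uncurry G) :=
    M.measurable_link hr measurable_fst measurable_snd
  have hstep : ∀ ω, (1 + s) ^ linkCount M r k i (M.realization ω)
      = ∏ j : T, (if B j ω ≤ G (M.X i ω) (M.X j ω) then 1 + s else 1) := by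
    intro ω
    rw [linkCount, ← Finset.prod_const, Finset.prod_filter, ← Finset.prod_coe_sort]
    rfl
  simp_rw [hstep]
  calc ∫⁻ ω, ∏ j : T, (if B j ω ≤ G (M.X i ω) (M.X j ω) then 1 + s else 1) ∂P
      ≤ ∫⁻ ω, ∏ j : T, (1 + s * ENNReal.ofReal (G (M.X i ω) (M.X j ω))) ∂P := by
        refine lintegral_prod_le_of_indepFun (A := fun ω (i : ℕ) => M.X i ω) (B := B)
          (F := fun j a u => if u ≤ G (a i) (a j) then 1 + s else 1)
          (C := fun j a => 1 + s * ENNReal.ofReal (G (a i) (a j)))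
          (measurable_positions M) (fun j => M.U_meas _ _) hBi hAB (fun j => ?_) (fun a j => ?_)
        · refine Measurable.ite (measurableSet_le measurable_snd ?_) measurable_const
            measurable_const
          exact M.measurable_link hr (by fun_prop) (by fun_prop)
        · have hfun : ∀ u : ℝ, (if u ≤ G (a i) (a j) then 1 + s else 1)
              = 1 + s * (Set.Iic (G (a i) (a j))).indicator 1 u := by
            intro u
            by_cases hu : u ≤ G (a i) (a j) <;> simp [hu]
          simp_rw [hfun]
          have hind : Measurable ((Set.Iic (G (a i) (a j))).indicator (1 : ℝ → ENNReal)) :=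
            measurable_one.indicator measurableSet_Iic
          rw [← lintegral_map (f := fun u => 1 + s * (Set.Iic (G (a i) (a j))).indicator 1 u)
            (by fun_prop) (M.U_meas _ _), M.U_unif _ _ (hpair j).1 (hpair j).2,
            lintegral_add_left measurable_const, lintegral_const_mul _ hind,
            lintegral_indicator_one measurableSet_Iic]
          have hle : volume.restrict (Set.Icc (0 : ℝ) 1) (Set.Iic (G (a i) (a j)))
              ≤ ENNReal.ofReal (G (a i) (a j)) := by
            rw [Measure.restrict_apply measurableSet_Iic]
            refine (measure_mono (t := Set.Icc 0 (G (a i) (a j))) fun u hu => ?_).trans ?_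
            · exact ⟨hu.2.1, hu.1⟩
            · simp
          simp only [lintegral_const, MeasurableSet.univ, Measure.restrict_apply, Set.univ_inter,
            Real.volume_Icc, sub_zero, ENNReal.ofReal_one, mul_one]
          gcongr
    _ ≤ ∫⁻ ω, ∏ j : T, (1 + s * ENNReal.ofReal (r ^ d * M.α)) ∂P := by
        refine lintegral_prod_le_of_indepFun (A := M.X i) (B := fun j : T => M.X j)
          (F := fun j x y => 1 + s * ENNReal.ofReal (G x y))
          (C := fun _ _ => 1 + s * ENNReal.ofReal (r ^ d * M.α))
          (M.X_meas i) (fun j => M.X_meas j) hXi hXX (fun j => ?_) (fun x j => ?_)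
        · exact (hG.ennreal_ofReal.const_mul s).const_add 1
        · have hGx : Measurable fun y => ENNReal.ofReal (G x y) :=
            (hG.comp measurable_prodMk_left).ennreal_ofReal
          have hGX : Measurable fun ω => ENNReal.ofReal (G x (M.X j ω)) := hGx.comp (M.X_meas j)
          rw [lintegral_add_left measurable_const,
            lintegral_const_mul _ hGX, lintegral_const, measure_univ, mul_one,
            ← lintegral_map (f := fun y => ENNReal.ofReal (G x y)) hGx (M.X_meas j),
            M.X_unif _ (hT1 j)]
          gcongr
          exact M.setLIntegral_link_le hr x
    _ = (1 + s * ENNReal.ofReal (r ^ d * M.α)) ^ (k - 1) := by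
        rw [lintegral_const, measure_univ, mul_one, Finset.prod_const, Finset.card_univ,
          Fintype.card_coe, Finset.card_erase_of_mem hi, Nat.card_Icc, Nat.add_sub_cancel]

lemma tsum_poisson_mul_pow_pred (m : ℕ) {q : ℝ} (hq : 0 ≤ q) :
    ∑' k : ℕ, ENNReal.ofReal (Real.exp (-(m : ℝ)) * (m : ℝ) ^ k / k.factorial)
      * (k * ENNReal.ofReal q ^ (k - 1)) = ENNReal.ofReal (m * Real.exp (m * (q - 1))) := by
  rw [tsum_eq_zero_add' ENNReal.summable]
  have hterm : ∀ k : ℕ,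
      ENNReal.ofReal (Real.exp (-(m : ℝ)) * (m : ℝ) ^ (k + 1) / (k + 1).factorial)
        * ((k + 1 : ℕ) * ENNReal.ofReal q ^ (k + 1 - 1))
      = ENNReal.ofReal (m * Real.exp (-(m : ℝ)) * ((m * q) ^ k / k.factorial)) := by
    intro k
    rw [← ENNReal.ofReal_natCast (k + 1), ← ENNReal.ofReal_pow hq,
      ← ENNReal.ofReal_mul (by positivity), ← ENNReal.ofReal_mul (by positivity)]
    congr 1
    rw [Nat.factorial_succ, Nat.add_sub_cancel]
    push_cast
    field_simp
    ring
  have hsum : HasSum (fun k : ℕ => m * Real.exp (-(m : ℝ)) * ((m * q) ^ k / k.factorial))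
      (m * Real.exp (-(m : ℝ)) * Real.exp (m * q)) := by
    rw [Real.exp_eq_exp_ℝ]
    exact (NormedSpace.expSeries_div_hasSum_exp (m * q : ℝ)).mul_left _
  simp_rw [hterm]
  rw [← ENNReal.ofReal_tsum_of_nonneg (fun k => by positivity) hsum.summable, hsum.tsum_eq]
  simp only [CharP.cast_eq_zero, zero_mul, mul_zero, zero_add]
  rw [mul_assoc, ← Real.exp_add]
  ring_nf

/-- First moment bound for the presence of a vertex of degree at least `t`. -/
lemma measure_exists_le_deg_le [IsProbabilityMeasure P] (M : Model d P) {r : ℝ} (hr : 0 < r)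
    (m : ℕ) {x : ℝ} (hx : 1 ≤ x) (t : ℝ) :
    P {ω | ∃ i ∈ Finset.Icc 1 (M.N m ω), t ≤ deg M m r ω i}
      ≤ ENNReal.ofReal (m * Real.exp (m * (r ^ d * M.α) * (x - 1) - t * Real.log x)) := by
  have hx0 : 0 < x := by linarith
  set p : ℝ := r ^ d * M.α
  have hp : 0 ≤ p := mul_nonneg (pow_nonneg hr.le d) M.α_pos.le
  let q : ℝ := 1 + (x - 1) * p
  have hq : 0 ≤ q := by have := mul_nonneg (sub_nonneg.2 hx) hp; simp only [q]; linarith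
  have hbase : (1 : ENNReal) + ENNReal.ofReal (x - 1) = ENNReal.ofReal x := by
    rw [← ENNReal.ofReal_one, ← ENNReal.ofReal_add zero_le_one (by linarith)]
    congr 1; ring
  have hqbase : (1 : ENNReal) + ENNReal.ofReal (x - 1) * ENNReal.ofReal p = ENNReal.ofReal q := by
    rw [← ENNReal.ofReal_mul (by linarith), ← ENNReal.ofReal_one,
      ← ENNReal.ofReal_add zero_le_one (mul_nonneg (by linarith) hp)]
  let E : ℕ → ℕ → Set ((ℕ → EuclideanSpace ℝ (Fin d)) × (ℕ × ℕ → ℝ)) :=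
    fun k i => {a | t ≤ linkCount M r k i a}
  have hE : ∀ k i, MeasurableSet (E k i) := fun k i =>
    measurableSet_le measurable_const
      (measurable_from_top.comp (measurable_linkCount M hr k i))
  have hmarkov : ∀ k, ∀ i ∈ Finset.Icc 1 k, P (M.realization ⁻¹' E k i)
      ≤ ENNReal.ofReal (Real.exp (-(t * Real.log x))) * ENNReal.ofReal q ^ (k - 1) := by
    intro k i hi
    have hmeas : Measurable fun ω => ENNReal.ofReal x ^ linkCount M r k i (M.realization ω) :=
      measurable_from_top.comp ((measurable_linkCount M hr k i).comp M.measurable_realization)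
    have hle := lintegral_pow_linkCount_le M hr hi (ENNReal.ofReal (x - 1))
    rw [hbase, hqbase] at hle
    refine (measure_mono (t := {ω | ENNReal.ofReal (Real.exp (t * Real.log x))
      ≤ ENNReal.ofReal x ^ linkCount M r k i (M.realization ω)}) fun ω hω => ?_).trans ?_
    · have hω' : t ≤ linkCount M r k i (M.realization ω) := hω
      simp only [Set.mem_ofPred_eq]
      rw [← ENNReal.ofReal_pow hx0.le]
      refine ENNReal.ofReal_le_ofReal ?_
      rw [← Real.exp_log (pow_pos hx0 _), Real.log_pow]
      exact Real.exp_le_exp.2 (mul_le_mul_of_nonneg_right hω' (Real.log_nonneg hx))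
    · refine (meas_ge_le_lintegral_div hmeas.aemeasurable
        (by simp [Real.exp_pos]) ENNReal.ofReal_ne_top).trans ?_
      rw [Real.exp_neg, ENNReal.ofReal_inv_of_pos (Real.exp_pos _), div_eq_mul_inv, mul_comm]
      gcongr
  calc P {ω | ∃ i ∈ Finset.Icc 1 (M.N m ω), t ≤ deg M m r ω i}
      ≤ P (⋃ k, ⋃ i ∈ Finset.Icc 1 k, (M.realization ⁻¹' E k i ∩ M.N m ⁻¹' {k})) := by
        refine measure_mono fun ω ⟨i, hi, hω⟩ => ?_
        simp only [Set.mem_iUnion]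
        refine ⟨M.N m ω, i, hi, ?_, rfl⟩
        exact hω.trans (Nat.cast_le.2 (deg_le_linkCount M m r ω i))
    _ ≤ ∑' k, ∑ i ∈ Finset.Icc 1 k, P (M.realization ⁻¹' E k i ∩ M.N m ⁻¹' {k}) :=
        (measure_iUnion_le _).trans (ENNReal.tsum_le_tsum fun k => measure_biUnion_finset_le _ _)
    _ ≤ ∑' k : ℕ, ENNReal.ofReal (Real.exp (-(t * Real.log x))) *
          (ENNReal.ofReal (Real.exp (-(m : ℝ)) * (m : ℝ) ^ k / k.factorial)
            * (k * ENNReal.ofReal q ^ (k - 1))) := by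
        refine ENNReal.tsum_le_tsum fun k => ?_
        have hterm : ∀ i ∈ Finset.Icc 1 k, P (M.realization ⁻¹' E k i ∩ M.N m ⁻¹' {k})
            ≤ ENNReal.ofReal (Real.exp (-(t * Real.log x))) * ENNReal.ofReal q ^ (k - 1) *
              ENNReal.ofReal (Real.exp (-(m : ℝ)) * (m : ℝ) ^ k / k.factorial) := by
          intro i hi
          rw [(indepFun_realization_count M m).measure_inter_preimage_eq_mul _ _ (hE k i)
            (measurableSet_singleton k), ← M.N_poisson m k]
          exact mul_le_mul_left (hmarkov k i hi) _
        refine (Finset.sum_le_sum hterm).trans (le_of_eq ?_)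
        rw [Finset.sum_const, Nat.card_Icc, Nat.add_sub_cancel, nsmul_eq_mul]
        ring
    _ = ENNReal.ofReal (m * Real.exp (m * p * (x - 1) - t * Real.log x)) := by
        rw [ENNReal.tsum_mul_left, tsum_poisson_mul_pow_pred m hq,
          ← ENNReal.ofReal_mul (Real.exp_pos _).le, mul_left_comm, ← Real.exp_add]
        congr 3
        simp only [q]
        ring

lemma deg_mono (M : Model d P) {n n' : ℕ} (hn : n ≤ n') {r r' : ℝ} (hr : 0 < r) (hrr' : r ≤ r')
    (ω : Ω) (i : ℕ) : deg M n r ω i ≤ deg M n' r' ω i := by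
  have hN : M.N n ω ≤ M.N n' ω := M.N_mono ω hn
  refine Set.ncard_le_ncard (fun j hj => ?_) ((Set.finite_Iic (M.N n' ω)).subset fun j hj => ?_)
  · obtain ⟨h1, h2, h3, h4, h5, h6⟩ := hj
    refine ⟨h1, h2, h3, h4.trans hN, h5.trans hN, h6.trans ?_⟩
    have ht := torusDist_nonneg (M.X i ω) (M.X j ω)
    exact M.g_antitone (div_nonneg ht (hr.le.trans hrr')) (div_nonneg ht hr.le)
      (div_le_div_of_nonneg_left ht hr hrr')
  · exact hj.2.2.2.2.1

lemma rhat_pos (M : Model d P) {γ : ℝ} (hγ : 0 < γ) {n : ℕ} (hn : 2 ≤ n) : 0 < rhat M γ n := by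
  have hn' : (1 : ℝ) < n := by exact_mod_cast hn
  have hlog := Real.log_pos hn'
  have hα := M.α_pos
  unfold rhat
  positivity

lemma rhat_pow (M : Model d P) (hd : d ≠ 0) {γ : ℝ} (hγ : 0 < γ) (n : ℕ) :
    rhat M γ n ^ d = γ * Real.log n / (M.α * n) := by
  have hlog := Real.log_natCast_nonneg n
  have hα := M.α_pos
  unfold rhat
  rw [one_div, Real.rpow_inv_natCast_pow (by positivity) hd]

lemma rhat_le_rhat (M : Model d P) {γ : ℝ} (hγ : 0 < γ) {n n' : ℕ} (hn : 3 ≤ n) (hnn' : n ≤ n') :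
    rhat M γ n' ≤ rhat M γ n := by
  have hα := M.α_pos
  have h3 : (3 : ℝ) ≤ n := by exact_mod_cast hn
  have hle : (n : ℝ) ≤ n' := by exact_mod_cast hnn'
  have he : Real.exp 1 ≤ n := (Real.exp_one_lt_d9.le.trans (by norm_num)).trans h3
  have h := Real.log_div_self_antitoneOn (a := (n : ℝ)) (b := n') he (he.trans hle) hle
  have hlog := Real.log_natCast_nonneg n'
  unfold rhat
  refine Real.rpow_le_rpow (by positivity) ?_ (by positivity)
  have key : ∀ l : ℕ, γ * Real.log l / (M.α * l) = γ / M.α * (Real.log l / l) := fun l =>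
    mul_div_mul_comm _ _ _ _
  rw [key, key]
  exact mul_le_mul_of_nonneg_left h (by positivity)

/-- Along the subsequence `k ^ m`, with the vertices of time `(k + 1) ^ m` and the radius of time
`k ^ m`, the first moment bound is eventually summable in `k`. -/
lemma eventually_tail_le {γ x : ℝ} (hH : 1 < γ * H x) :
    ∃ m : ℕ, m ≠ 0 ∧ ∀ᶠ k : ℕ in atTop,
      ((k + 1 : ℕ) ^ m : ℝ) * Real.exp (((k + 1 : ℕ) ^ m : ℝ) *
        (γ * Real.log (k ^ m) / k ^ m) * (x - 1) - γ * x * Real.log (k ^ m) * Real.log x)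
      ≤ 2 ^ m * ((k : ℝ) ^ 2)⁻¹ := by
  set ε : ℝ := (γ * H x - 1) / 2 with hε
  have hε0 : 0 < ε := by linarith
  obtain ⟨m, hm⟩ := exists_nat_ge (2 / ε)
  have hmε : 2 ≤ m * ε := (div_le_iff₀ hε0).1 hm
  have hm0 : m ≠ 0 := by
    rintro rfl
    norm_num at hmε
  refine ⟨m, hm0, ?_⟩
  have hlim : Tendsto (fun k : ℕ => γ * (((1 + 1 / (k : ℝ)) ^ m - 1) * (x - 1))) atTop
      (nhds (γ * (((1 + 0) ^ m - 1) * (x - 1)))) :=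
    ((((tendsto_one_div_atTop_nhds_zero_nat (𝕜 := ℝ)).const_add 1).pow m).sub_const 1).mul_const
      (x - 1) |>.const_mul γ
  simp only [add_zero, one_pow, sub_self, zero_mul, mul_zero] at hlim
  filter_upwards [hlim.eventually_lt_const hε0, eventually_ge_atTop 1] with k hk hk1
  have hk0 : (1 : ℝ) ≤ k := by exact_mod_cast hk1
  have hkpos : (0 : ℝ) < k := by linarith
  have hlogk : 0 ≤ Real.log k := Real.log_nonneg hk0
  have hρ : ((k + 1 : ℕ) ^ m : ℝ) = (1 + 1 / (k : ℝ)) ^ m * k ^ m := by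
    rw [← mul_pow]
    congr 1
    push_cast
    field_simp
  have hexp : ((k + 1 : ℕ) ^ m : ℝ) * (γ * Real.log (k ^ m) / k ^ m) * (x - 1)
        - γ * x * Real.log (k ^ m) * Real.log x
      = m * Real.log k * (γ * (((1 + 1 / (k : ℝ)) ^ m - 1) * (x - 1)) - γ * H x) := by
    rw [hρ, Real.log_pow, H]
    field_simp
    ring
  have hexp_le : ((k + 1 : ℕ) ^ m : ℝ) * (γ * Real.log (k ^ m) / k ^ m) * (x - 1)
        - γ * x * Real.log (k ^ m) * Real.log x ≤ -(m * Real.log k) - 2 * Real.log k := by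
    rw [hexp]
    have h1 : m * Real.log k * (γ * (((1 + 1 / (k : ℝ)) ^ m - 1) * (x - 1)) - γ * H x)
        ≤ m * Real.log k * (-(1 + ε)) :=
      mul_le_mul_of_nonneg_left (by linarith) (by positivity)
    have h2 := mul_le_mul_of_nonneg_right hmε hlogk
    linarith
  have hpow : ((k + 1 : ℕ) ^ m : ℝ) ≤ 2 ^ m * k ^ m := by
    rw [← mul_pow]
    refine pow_le_pow_left₀ (by positivity) ?_ m
    push_cast
    linarith
  calc _ ≤ (2 ^ m * (k : ℝ) ^ m) * Real.exp (-(m * Real.log k) - 2 * Real.log k) :=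
        mul_le_mul hpow (Real.exp_le_exp.2 hexp_le) (Real.exp_pos _).le (by positivity)
    _ = 2 ^ m * ((k : ℝ) ^ 2)⁻¹ := by
        rw [sub_eq_add_neg, Real.exp_add, Real.exp_neg, Real.exp_neg, ← Real.log_pow,
          Real.exp_log (by positivity), show (2 : ℝ) * Real.log k = Real.log (k ^ 2) by
            rw [Real.log_pow]; norm_num, Real.exp_log (by positivity)]
        field_simp

lemma exists_pow_le_lt_succ_pow {m : ℕ} (hm : m ≠ 0) {K n : ℕ} (hn : K ^ m ≤ n) :
    ∃ k, K ≤ k ∧ k ^ m ≤ n ∧ n < (k + 1) ^ m := by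
  have hK : K ≤ n := (Nat.le_self_pow hm K).trans hn
  refine ⟨Nat.findGreatest (fun k => k ^ m ≤ n) n, Nat.le_findGreatest hK hn,
    Nat.findGreatest_spec (P := fun k => k ^ m ≤ n) hK hn, ?_⟩
  by_contra! h
  have h1 := Nat.le_findGreatest (P := fun k => k ^ m ≤ n) ((Nat.le_self_pow hm _).trans h) h
  omega

lemma ae_eventually_maxDeg_le (hd : d ≠ 0) [IsProbabilityMeasure P] (M : Model d P) {γ : ℝ}
    (hγ : 0 < γ) {x : ℝ} (hx : Hplusinv (1 / γ) < x) :
    ∀ᵐ ω ∂P, ∀ᶠ n : ℕ in atTop, (maxDeg M n (rhat M γ n) ω : ℝ) ≤ γ * x * Real.log n := by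
  have hγ' : 0 ≤ 1 / γ := by positivity
  have hx1 : 1 ≤ x := (one_le_Hplusinv hγ').trans hx.le
  have hH : 1 < γ * H x := by
    have h := lt_H_of_Hplusinv_lt hγ' hx
    rwa [div_lt_iff₀' hγ] at h
  obtain ⟨m, hm0, hm⟩ := eventually_tail_le hH
  obtain ⟨K₀, hK₀⟩ := eventually_atTop.1 hm
  set K := max K₀ 3
  have hα := M.α_pos
  let bad : ℕ → Set Ω := fun k => {ω | ∃ i ∈ Finset.Icc 1 (M.N ((k + 1) ^ m) ω),
    γ * x * Real.log (k ^ m) ≤ deg M ((k + 1) ^ m) (rhat M γ (k ^ m)) ω i}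
  have hthree : ∀ k, K ≤ k → 3 ≤ k ^ m := fun k hk =>
    ((le_max_right _ _).trans hk).trans (Nat.le_self_pow hm0 k)
  have hbad : ∀ k, K ≤ k → P (bad k) ≤ ENNReal.ofReal (2 ^ m * ((k : ℝ) ^ 2)⁻¹) := by
    intro k hk
    have hk3 := hthree k hk
    refine (measure_exists_le_deg_le M (rhat_pos M hγ (by omega)) ((k + 1) ^ m) hx1 _).trans
      (ENNReal.ofReal_le_ofReal ?_)
    refine le_trans (le_of_eq ?_) (hK₀ k ((le_max_left _ _).trans hk))
    have hmean : rhat M γ (k ^ m) ^ d * M.α = γ * Real.log (k ^ m) / k ^ m := by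
      have hpos : (0 : ℝ) < k ^ m := by exact_mod_cast (by omega : 0 < k ^ m)
      rw [rhat_pow M hd hγ]
      push_cast
      field_simp
    rw [hmean]
    push_cast
    rfl
  have hsum : ∑' k, P (bad (k + K)) ≠ ⊤ := by
    have hs : Summable fun k : ℕ => 2 ^ m * (((k + K : ℕ) : ℝ) ^ 2)⁻¹ :=
      ((summable_nat_add_iff K).2 (Real.summable_nat_pow_inv.2 one_lt_two)).mul_left _
    refine ne_top_of_le_ne_top ?_ (ENNReal.tsum_le_tsum fun k => hbad (k + K) (by omega))
    exact hs.tsum_ofReal_ne_top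
  filter_upwards [ae_eventually_notMem hsum] with ω hω
  obtain ⟨K₁, hK₁⟩ := eventually_atTop.1 hω
  filter_upwards [eventually_ge_atTop ((K₁ + K) ^ m)] with n hn
  obtain ⟨k, hKk, hkn, hnk⟩ := exists_pow_le_lt_succ_pow hm0 hn
  have hk3 := hthree k (by omega)
  have hgood : ω ∉ bad k := by
    have h := hK₁ (k - K) (by omega)
    rwa [Nat.sub_add_cancel (by omega)] at h
  have hkpos : (0 : ℝ) < (k : ℝ) ^ m := by exact_mod_cast (by omega : 0 < k ^ m)
  have hlog : Real.log ((k : ℝ) ^ m) ≤ Real.log n :=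
    Real.log_le_log hkpos (by exact_mod_cast hkn)
  have hlogn : 0 ≤ Real.log n := Real.log_natCast_nonneg n
  have hγx : 0 ≤ γ * x := by positivity
  have hdeg : ∀ i ∈ Finset.Icc 1 (M.N n ω),
      deg M n (rhat M γ n) ω i ≤ ⌊γ * x * Real.log n⌋₊ := by
    intro i hi
    refine Nat.le_floor ?_
    by_contra! hlt
    refine hgood ⟨i, ?_, ?_⟩
    · have hN : M.N n ω ≤ M.N ((k + 1) ^ m) ω := M.N_mono ω hnk.le
      rw [Finset.mem_Icc] at hi ⊢
      exact ⟨hi.1, hi.2.trans hN⟩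
    · have hmono := deg_mono M hnk.le (rhat_pos M hγ (by omega))
        (rhat_le_rhat M hγ hk3 hkn) ω i
      exact ((mul_le_mul_of_nonneg_left hlog hγx).trans hlt.le).trans (Nat.cast_le.2 hmono)
  have hsup : maxDeg M n (rhat M γ n) ω ≤ ⌊γ * x * Real.log n⌋₊ := Finset.sup_le hdeg
  exact (Nat.cast_le.2 hsup).trans (Nat.floor_le (mul_nonneg hγx hlogn))

/-- Theorem 3(i): a.s. `limsup Δ_n/log n ≤ γ H₊⁻¹(1/γ)`. -/
theorem maxDeg_limsup_le (hd : 2 ≤ d) [IsProbabilityMeasure P] (M : Model d P)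
    {c : ℝ} (hc : (d : ℝ) < c)
    (hg : M.g =o[atTop] fun r : ℝ => r ^ (-c))
    {γ : ℝ} (hγ : 0 < γ) :
    ∀ᵐ ω ∂P, Filter.limsup
      (fun n : ℕ => (maxDeg M n (rhat M γ n) ω : ℝ) / Real.log n) atTop
        ≤ γ * Hplusinv (1 / γ) := by
  have hall : ∀ᵐ ω ∂P, ∀ l : ℕ, ∀ᶠ n : ℕ in atTop, (maxDeg M n (rhat M γ n) ω : ℝ)
      ≤ γ * (Hplusinv (1 / γ) + 1 / ((l : ℝ) + 1)) * Real.log n :=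
    ae_all_iff.2 fun l => ae_eventually_maxDeg_le (by omega) M hγ
      (lt_add_of_pos_right _ Nat.one_div_pos_of_nat)
  filter_upwards [hall] with ω hω
  have hlim : Tendsto (fun l : ℕ => γ * (Hplusinv (1 / γ) + 1 / ((l : ℝ) + 1))) atTop
      (nhds (γ * (Hplusinv (1 / γ) + 0))) :=
    (tendsto_one_div_add_atTop_nhds_zero_nat.const_add _).const_mul _
  rw [add_zero] at hlim
  refine ge_of_tendsto' hlim fun l => limsup_le_of_le ?_ ?_
  · refine isCoboundedUnder_le_of_le atTop (x := 0) fun n => ?_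
    exact div_nonneg (Nat.cast_nonneg _) (Real.log_natCast_nonneg n)
  · filter_upwards [hω l, eventually_ge_atTop 2] with n hn hn2
    exact (div_le_iff₀ (Real.log_pos (by exact_mod_cast hn2))).2 hn

end RCM
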